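/- Let l ≥ 1 and let P = {P_0,…,P_{l−1}} be a partition of ω into infinite sets with min P_i < min P_j whenever i < j. Then a subset 𝓧 ⊆ 𝓔^P_∞ has the property of Baire with respect to the Ellentuck topology if and only if 𝓧 is Ramsey; moreover, 𝓧 is Ellentuck-meagre if and only if 𝓧 is Ramsey null. (That is, (𝓔^P_∞, ≤, r) is a topological Ramsey space.) -/

import Mathlib

open Set

namespace DualRamsey

/-- `F` is a coarsening of `E` (written `F ≤ E` in the paper): every class of `F`
is a union of classes of `E`. -/
def Coarsens {X : Type*} (F E : Setoid X) : Prop := ∀ a b, E.r a b → F.r a b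

/-- The set of equivalence classes of a setoid. -/
def classes {X : Type*} (E : Setoid X) : Set (Set X) := {C | ∃ x, C = {y | E.r x y}}

/-- The set of minimal representatives of the classes of an equivalence relation on ℕ. -/
def minReps (E : Setoid ℕ) : Set ℕ := {n | ∀ m, E.r n m → n ≤ m}

/-- `pRep E k` is `p_k(E)`, the k-th minimal representative in increasing order. -/
noncomputable def pRep (E : Setoid ℕ) (k : ℕ) : ℕ := Nat.nth (· ∈ minReps E) k

/-- `approx n E` is the n-th approximation `r_n(E)`: `E` restricted to `{0,…,p_n(E)-1}`,
identified with its graph. -/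
noncomputable def approx (n : ℕ) (E : Setoid ℕ) : Set (ℕ × ℕ) :=
  {q | q.1 < pRep E n ∧ q.2 < pRep E n ∧ E.r q.1 q.2}

/-- Basic set `[a, E]` relative to a space `S` of equivalence relations. -/
noncomputable def basicSet (S : Set (Setoid ℕ)) (a : Set (ℕ × ℕ)) (E : ↥S) : Set ↥S :=
  {F | Coarsens F.1 E.1 ∧ ∃ n, approx n F.1 = a}

/-- The Ellentuck topology on a space `S` of equivalence relations. -/
noncomputable def ellentuckTop (S : Set (Setoid ℕ)) : TopologicalSpace ↥S :=
  TopologicalSpace.generateFrom {U | ∃ a E, U = basicSet S a E}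

def IsRamsey (S : Set (Setoid ℕ)) (X : Set ↥S) : Prop :=
  ∀ (a : Set (ℕ × ℕ)) (B : ↥S), (basicSet S a B).Nonempty →
    ∃ A ∈ basicSet S a B, basicSet S a A ⊆ X ∨ basicSet S a A ∩ X = ∅

def IsRamseyNull (S : Set (Setoid ℕ)) (X : Set ↥S) : Prop :=
  ∀ (a : Set (ℕ × ℕ)) (B : ↥S), (basicSet S a B).Nonempty →
    ∃ A ∈ basicSet S a B, basicSet S a A ∩ X = ∅

/-- The property of Baire with respect to the Ellentuck topology. -/
noncomputable def HasBP (S : Set (Setoid ℕ)) (X : Set ↥S) : Prop :=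
  ∃ O M : Set ↥S, (ellentuckTop S).IsOpen O ∧ @IsMeagre _ (ellentuckTop S) M ∧
    X = (O \ M) ∪ (M \ O)

/-- The Souslin operation applied to a scheme indexed by finite sequences of naturals. -/
def souslinOp {X : Type*} (A : List ℕ → Set X) : Set X :=
  ⋃ x : ℕ → ℕ, ⋂ n : ℕ, A ((List.range n).map x)

/-- `Y` belongs to the smallest field of sets containing all `t`-open sets and
closed under the Souslin operation. -/
def SouslinMeasurable {X : Type*} (t : TopologicalSpace X) (Y : Set X) : Prop :=
  ∀ 𝒜 : Set (Set X),
    (∀ U, t.IsOpen U → U ∈ 𝒜) →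
    (∀ A ∈ 𝒜, Aᶜ ∈ 𝒜) →
    (∀ A ∈ 𝒜, ∀ B ∈ 𝒜, A ∪ B ∈ 𝒜) →
    (∀ f : List ℕ → Set X, (∀ s, f s ∈ 𝒜) → souslinOp f ∈ 𝒜) →
    Y ∈ 𝒜

/-- The graph of an equivalence relation as a boolean-valued function. -/
noncomputable def graphMap {X : Type*} (E : Setoid X) : X × X → Bool :=
  fun q => @decide (E.r q.1 q.2) (Classical.dec _)

/-- The metrizable topology on a space of equivalence relations, as a subspace of
`2^(X × X)` via graphs. -/
noncomputable def graphTop {X : Type*} (S : Set (Setoid X)) : TopologicalSpace ↥S :=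
  TopologicalSpace.induced (fun E => graphMap E.1) inferInstance



/-- `𝓔^P_∞` for a partition `P` of ℕ into `l` infinite pieces: the `P`-alternating
equivalence relations, i.e. those with infinitely many classes whose k-th minimal
representative lies in `P (k mod l)`. -/
noncomputable def EPalt (l : ℕ) (hl : 0 < l) (P : Fin l → Set ℕ) : Set (Setoid ℕ) :=
  {E | (classes E).Infinite ∧ ∀ k : ℕ, pRep E k ∈ P ⟨k % l, Nat.mod_lt k hl⟩}


section Abstract
variable {M S : Type*} [Monoid M] [MulAction M S] [TopologicalSpace S]

/-- Abstract hypotheses. -/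
structure AbsRamsey (K : ℕ → Submonoid M) (S : Type*) [MulAction M S] [TopologicalSpace S] :
    Prop where
  anti : Antitone K
  fusion : ∀ Q : ℕ → S → Prop, (∀ n f, Q n f → ∀ h ∈ K n, Q n (h • f)) →
    (∀ n f, ∃ h ∈ K n, Q n (h • f)) →
    ∀ N g, ∃ h ∈ K N, ∀ n, N ≤ n → ∀ f ∈ K N, Q n (f • h • g)
  pigeon : ∀ n, ∀ c : M → Prop, (∀ f ∈ K n, ∀ h ∈ K (n+1), (c (h * f) ↔ c f)) →
    ∃ h ∈ K n, (∀ f ∈ K n, c (f * h)) ∨ (∀ f ∈ K n, ¬ c (f * h))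
  isOpen_iff : ∀ U : Set S, IsOpen U ↔ ∀ s ∈ U, ∃ n, ∀ h ∈ K n, h • s ∈ U

variable {K : ℕ → Submonoid M}

def ARamsey (K : ℕ → Submonoid M) (X : Set S) : Prop :=
  ∀ n (F : S), ∃ h ∈ K n, (∀ k ∈ K n, k • h • F ∈ X) ∨ (∀ k ∈ K n, k • h • F ∉ X)

def ANull (K : ℕ → Submonoid M) (X : Set S) : Prop :=
  ∀ n (F : S), ∃ h ∈ K n, (∀ k ∈ K n, k • h • F ∉ X)

theorem AbsRamsey.open_ramsey (H : AbsRamsey K S) {X : Set S} (hX : IsOpen X) :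
    ARamsey K X := by
  set A : ℕ → S → Prop := fun n f => ∀ k ∈ K n, k • f ∈ X with hA
  set R : ℕ → S → Prop := fun n f => ∀ h ∈ K n, ¬ A n (h • f) with hR
  have Ah : ∀ n f, A n f → ∀ h ∈ K n, A n (h • f) := by
    intro n f h1 h hh k hk
    rw [← mul_smul]
    exact h1 _ (mul_mem hk hh)
  have Rh : ∀ n f, R n f → ∀ h ∈ K n, R n (h • f) := by
    intro n f h1 h hh k hk
    rw [← mul_smul]
    exact h1 _ (mul_mem hk hh)
  have dec : ∀ N g, ∃ h ∈ K N, ∀ n, N ≤ n → ∀ f ∈ K N, A n (f • h • g) ∨ R n (f • h • g) := by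
    apply H.fusion (fun n f => A n f ∨ R n f)
    · rintro n f (h1 | h1) h hh
      · exact Or.inl (Ah n f h1 h hh)
      · exact Or.inr (Rh n f h1 h hh)
    · intro n f
      by_cases h1 : R n f
      · exact ⟨1, one_mem _, Or.inr (by simpa using h1)⟩
      · simp only [hR] at h1
        push Not at h1
        obtain ⟨h, hh, h2⟩ := h1
        exact ⟨h, hh, Or.inl h2⟩
  have main := H.fusion (fun n f => A n f ∨ ∀ k ∈ K n, R (n+1) (k • f)) (by
    rintro n f (h1 | h1) h hh
    · exact Or.inl (Ah n f h1 h hh)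
    · refine Or.inr fun k hk => ?_
      rw [← mul_smul]
      exact h1 _ (mul_mem hk hh)) (by
    intro n f
    obtain ⟨h1, hh1, hd⟩ := dec n f
    by_cases hAn : A n (h1 • f)
    · exact ⟨h1, hh1, Or.inl hAn⟩
    have hRn : R n (h1 • f) := by
      have := hd n le_rfl 1 (one_mem _)
      rw [one_smul] at this
      exact this.resolve_left hAn
    obtain ⟨h2, hh2, hc⟩ := H.pigeon n (fun k => A (n+1) (k • h1 • f)) (by
      intro k hk h hh
      constructor
      · intro h3
        rcases hd (n+1) (Nat.le_succ n) k hk with h4 | h4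
        · exact h4
        · rw [mul_smul] at h3
          exact absurd h3 (h4 h hh)
      · intro h3
        rw [mul_smul]
        exact Ah _ _ h3 h hh)
    refine ⟨h2 * h1, mul_mem hh2 hh1, Or.inr ?_⟩
    rcases hc with hc | hc
    · exfalso
      apply hRn h2 hh2
      intro k hk
      have := hc k hk 1 (one_mem _)
      rw [one_smul, mul_smul] at this
      exact this
    · intro k hk
      have h5 := hc k hk
      have h6 := (hd (n+1) (Nat.le_succ n) (k * h2) (mul_mem hk hh2)).resolve_left h5
      simpa [mul_smul] using h6)
  intro N g
  obtain ⟨h, hh, hm⟩ := main N g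
  refine ⟨h, hh, ?_⟩
  by_cases hAN : A N (h • g)
  · exact Or.inl hAN
  right
  have h0 : ∀ k ∈ K N, R (N+1) (k • h • g) := by
    have := (hm N le_rfl 1 (one_mem _))
    rw [one_smul] at this
    exact this.resolve_left hAN
  have hall : ∀ i, ∀ k ∈ K N, R (N+1+i) (k • h • g) := by
    intro i
    induction i with
    | zero => exact h0
    | succ i ih =>
      intro k hk
      have h1 := ih k hk
      have h2 : ¬ A (N+1+i) (k • h • g) := by
        have := h1 1 (one_mem _)
        rwa [one_smul] at this
      have h3 := (hm (N+1+i) (by omega) k hk).resolve_left h2 1 (one_mem _)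
      rwa [one_smul] at h3
  intro k hk hkX
  obtain ⟨m, hmm⟩ := (H.isOpen_iff X).1 hX _ hkX
  refine hall m k hk 1 (one_mem _) ?_
  rw [one_smul]
  intro j hj
  exact hmm j (H.anti (by omega) hj)

theorem AbsRamsey.dense_iff (H : AbsRamsey K S) {O : Set S} :
    Dense O ↔ ∀ n F, ∃ h ∈ K n, h • F ∈ O := by
  constructor
  · intro hd n F
    have ho : IsOpen {s : S | ∃ h ∈ K n, h • F = s} := by
      rw [H.isOpen_iff]
      rintro s ⟨h, hh, rfl⟩
      exact ⟨n, fun k hk => ⟨k * h, mul_mem hk hh, mul_smul _ _ _⟩⟩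
    obtain ⟨s, ⟨h, hh, rfl⟩, h2⟩ := hd.inter_open_nonempty _ ho ⟨F, 1, one_mem _, one_smul _ _⟩
    exact ⟨h, hh, h2⟩
  · intro h
    rw [dense_iff_inter_open]
    rintro U hU ⟨s, hs⟩
    obtain ⟨n, hn⟩ := (H.isOpen_iff U).1 hU s hs
    obtain ⟨k, hk, hkO⟩ := h n s
    exact ⟨_, hn k hk, hkO⟩

theorem AbsRamsey.meagre_null (H : AbsRamsey K S) {X : Set S} (hX : IsMeagre X) :
    ANull K X := by
  rw [IsMeagre, mem_residual_iff] at hX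
  obtain ⟨T, hTo, hTd, hTc, hTs⟩ := hX
  have hex : ∃ O : ℕ → Set S, (∀ i, IsOpen (O i)) ∧ (∀ i, Dense (O i)) ∧ (⋂ i, O i) ⊆ Xᶜ := by
    rcases T.eq_empty_or_nonempty with rfl | hne
    · refine ⟨fun _ => univ, fun _ => isOpen_univ, fun _ => dense_univ, ?_⟩
      simpa using hTs
    · obtain ⟨O, rfl⟩ := hTc.exists_eq_range hne
      refine ⟨O, fun i => hTo _ ⟨i, rfl⟩, fun i => hTd _ ⟨i, rfl⟩, ?_⟩
      simpa using hTs
  obtain ⟨O, hOo, hOd, hOs⟩ := hex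
  have one : ∀ i n F, ∃ h ∈ K n, ∀ k ∈ K n, k • h • F ∈ O i := by
    intro i n F
    obtain ⟨h, hh, h1 | h1⟩ := H.open_ramsey (hOo i) n F
    · exact ⟨h, hh, h1⟩
    · obtain ⟨k, hk, hkO⟩ := H.dense_iff.1 (hOd i) n (h • F)
      exact absurd hkO (h1 k hk)
  have fin : ∀ m n F, ∃ h ∈ K n, ∀ i < m, ∀ k ∈ K n, k • h • F ∈ O i := by
    intro m n F
    induction m with
    | zero => exact ⟨1, one_mem _, by simp⟩
    | succ m ih =>
      obtain ⟨h, hh, h1⟩ := ih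
      obtain ⟨h', hh', h2⟩ := one m n (h • F)
      refine ⟨h' * h, mul_mem hh' hh, ?_⟩
      intro i hi k hk
      rw [mul_smul]
      rcases Nat.lt_succ_iff_lt_or_eq.1 hi with hi | rfl
      · rw [← mul_smul]
        exact h1 i hi _ (mul_mem hk hh')
      · exact h2 k hk
  intro N F
  obtain ⟨h, hh, hm⟩ := H.fusion (fun n f => ∀ i < n, ∀ k ∈ K n, k • f ∈ O i) (by
    intro n f h1 h hh i hi k hk
    rw [← mul_smul]
    exact h1 i hi _ (mul_mem hk hh)) (fun n f => fin n n f) N F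
  refine ⟨h, hh, fun k hk => hOs ?_⟩
  rw [mem_iInter]
  intro i
  have := hm (N + i + 1) (by omega) k hk i (by omega) 1 (one_mem _)
  rwa [one_smul] at this

theorem AbsRamsey.null_meagre (H : AbsRamsey K S) {X : Set S} (hX : ANull K X) :
    IsMeagre X := by
  set U : Set S := {s | ∃ n, ∀ h ∈ K n, h • s ∉ X} with hU
  have hUo : IsOpen U := by
    rw [H.isOpen_iff]
    rintro s ⟨n, hn⟩
    refine ⟨n, fun h hh => ⟨n, fun k hk => ?_⟩⟩
    rw [← mul_smul]
    exact hn _ (mul_mem hk hh)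
  have hUd : Dense U := by
    rw [H.dense_iff]
    intro n F
    obtain ⟨h, hh, h1⟩ := hX n F
    exact ⟨h, hh, n, h1⟩
  rw [IsMeagre, mem_residual_iff]
  refine ⟨{U}, by simpa using hUo, by simpa using hUd, by simp, ?_⟩
  rw [sInter_singleton]
  rintro s ⟨n, hn⟩
  have := hn 1 (one_mem _)
  rwa [one_smul] at this

theorem AbsRamsey.main (H : AbsRamsey K S) (X : Set S) :
    ((∃ O M : Set S, IsOpen O ∧ IsMeagre M ∧ X = (O \ M) ∪ (M \ O)) ↔ ARamsey K X) ∧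
    (IsMeagre X ↔ ANull K X) := by
  refine ⟨⟨?_, ?_⟩, H.meagre_null, H.null_meagre⟩
  · rintro ⟨O, M, hO, hM, rfl⟩ n F
    obtain ⟨h, hh, h1⟩ := H.open_ramsey hO n F
    obtain ⟨h', hh', h2⟩ := H.meagre_null hM n (h • F)
    refine ⟨h' * h, mul_mem hh' hh, ?_⟩
    rcases h1 with h1 | h1
    · left
      intro k hk
      rw [mul_smul]
      left
      refine ⟨?_, h2 k hk⟩
      rw [← mul_smul]
      exact h1 _ (mul_mem hk hh')
    · right
      intro k hk
      rw [mul_smul]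
      rintro (h3 | h3)
      · have h4 := h3.1
        rw [← mul_smul] at h4
        exact h1 _ (mul_mem hk hh') h4
      · exact h2 k hk h3.1
  · intro hX
    refine ⟨interior X, X \ interior X, isOpen_interior, H.null_meagre ?_, ?_⟩
    · intro n F
      obtain ⟨h, hh, h1 | h1⟩ := hX n F
      · refine ⟨h, hh, fun k hk hmem => hmem.2 ?_⟩
        rw [mem_interior]
        refine ⟨{s | ∃ j ∈ K n, j • h • F = s}, ?_, ?_, ⟨k, hk, rfl⟩⟩
        · rintro _ ⟨j, hj, rfl⟩
          exact h1 j hj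
        · rw [H.isOpen_iff]
          rintro s ⟨j, hj, rfl⟩
          exact ⟨n, fun k hk => ⟨k * j, mul_mem hk hj, mul_smul _ _ _⟩⟩
      · exact ⟨h, hh, fun k hk hmem => h1 k hk hmem.1⟩
    · have := interior_subset (s := X)
      ext s
      simp only [mem_union, mem_sdiff]
      have := @this s
      tauto

end Abstract


section CS

theorem exists_min_left {T : Type*} [Semigroup T] [Nonempty T] [TopologicalSpace T]
    [CompactSpace T] [T2Space T] (hc : ∀ r : T, Continuous (· * r)) :
    ∃ L : Set T, L.Nonempty ∧ (∀ a ∈ L, ∀ t, t * a ∈ L) ∧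
      ∀ a ∈ L, ∀ b ∈ L, ∃ t, b = t * a := by
  let 𝒮 : Set (Set T) := {N | IsClosed N ∧ N.Nonempty ∧ ∀ a ∈ N, ∀ t, t * a ∈ N}
  obtain ⟨L, hL⟩ : ∃ L, Minimal (· ∈ 𝒮) L := by
    refine zorn_superset 𝒮 fun c hcs hchain => ?_
    rcases c.eq_empty_or_nonempty with rfl | hne
    · exact ⟨univ, ⟨isClosed_univ, univ_nonempty, fun _ _ _ => mem_univ _⟩, by simp⟩
    · refine ⟨⋂₀ c, ⟨isClosed_sInter fun t ht => (hcs ht).1, ?_, ?_⟩,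
        fun s hs => sInter_subset_of_mem hs⟩
      · have : Nonempty c := hne.to_subtype
        apply IsCompact.nonempty_sInter_of_directed_nonempty_isCompact_isClosed
        · exact IsChain.directedOn (r := fun a b : Set T => a ⊇ b) hchain.symm
        · exact fun t ht => (hcs ht).2.1
        · exact fun t ht => (hcs ht).1.isCompact
        · exact fun t ht => (hcs ht).1
      · intro a ha t s hs
        exact (hcs hs).2.2 a (ha s hs) t
  refine ⟨L, hL.prop.2.1, hL.prop.2.2, fun a ha b hb => ?_⟩
  have hmem : range (· * a) ∈ 𝒮 := by
    refine ⟨(isCompact_range (hc a)).isClosed, range_nonempty _, ?_⟩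
    rintro _ ⟨t, rfl⟩ s
    exact ⟨s * t, mul_assoc _ _ _⟩
  have hsub : range (· * a) ⊆ L := by
    rintro _ ⟨t, rfl⟩
    exact hL.prop.2.2 a ha t
  obtain ⟨t, ht⟩ := hL.le_of_le hmem hsub hb
  exact ⟨t, ht.symm⟩

attribute [local instance] Ultrafilter.mul Ultrafilter.semigroup

theorem ultra_map_mul {A B : Type*} [Monoid A] [Monoid B] (f : A →* B) (U V : Ultrafilter A) :
    (U * V).map f = U.map f * V.map f := by
  apply Ultrafilter.coe_injective
  ext s
  have h1 := Ultrafilter.eventually_mul (U.map f) (V.map f) (· ∈ s)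
  have h2 := Ultrafilter.eventually_mul U V (fun x => f x ∈ s)
  simp only [Ultrafilter.coe_map, Filter.eventually_map, map_mul] at h1 h2
  exact h2.trans h1.symm

variable {Λ : Type*}

/-- Substitution of a letter for the variable. -/
def subst (a : Λ) : FreeMonoid (Option Λ) →* FreeMonoid Λ := FreeMonoid.map (fun o => o.getD a)

def pre (w0 : FreeMonoid Λ) (v : ℕ → FreeMonoid (Option Λ)) (a : ℕ → Λ) : ℕ → FreeMonoid Λ
  | 0 => w0
  | k+1 => pre w0 v a k * subst (a k) (v k)

theorem cs_ultra (Λ : Type*) : ∃ v : Ultrafilter (FreeMonoid (Option Λ)),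
    (∀ᶠ w in (v : Filter (FreeMonoid (Option Λ))), ∃ w', w = FreeMonoid.of none * w') ∧
    ∀ a b : Λ, v.map (subst a) * v.map (subst b) = v.map (subst a) := by
  obtain ⟨L, ⟨p, hp⟩, hL1, hL2⟩ := exists_min_left (T := Ultrafilter (FreeMonoid Λ))
    Ultrafilter.continuous_mul_left
  let p' : Ultrafilter (FreeMonoid (Option Λ)) := p.map (FreeMonoid.map some)
  have hp' : ∀ a, p'.map (subst a) = p := by
    intro a
    show (p.map _).map _ = p
    rw [Ultrafilter.map_map]
    convert Ultrafilter.map_id p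
    ext x
    simp only [Function.comp, subst, FreeMonoid.map_map]
    show (FreeMonoid.map id) x = x
    simp [FreeMonoid.map_id]
  let V : Set (FreeMonoid (Option Λ)) := {w | ∃ w', w = FreeMonoid.of none * w'}
  let βV : Set (Ultrafilter (FreeMonoid (Option Λ))) := {U | V ∈ U}
  have hβ : IsClosed βV := ultrafilter_isClosed_basic V
  obtain ⟨v, ⟨v', hv', hvv⟩, hid⟩ := exists_idempotent_in_compact_subsemigroup
    (M := Ultrafilter (FreeMonoid (Option Λ))) Ultrafilter.continuous_mul_left
    ((· * p') '' βV)
    (Set.Nonempty.image _ ⟨pure (FreeMonoid.of none), by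
      show V ∈ (pure _ : Ultrafilter _)
      exact ⟨1, by simp⟩⟩)
    (hβ.isCompact.image (Ultrafilter.continuous_mul_left p'))
    (by
      rintro _ ⟨x, hx, rfl⟩ _ ⟨y, hy, rfl⟩
      refine ⟨x * p' * y, ?_, by simp only [mul_assoc]⟩
      show ∀ᶠ w in (x * p' * y : Ultrafilter _), w ∈ V
      rw [mul_assoc, Ultrafilter.eventually_mul]
      filter_upwards [hx] with w hw
      refine Filter.Eventually.of_forall fun u => ?_
      obtain ⟨w', rfl⟩ := hw
      exact ⟨w' * u, mul_assoc _ _ _⟩)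
  have hvL : ∀ a, v.map (subst a) ∈ L := by
    intro a
    rw [← hvv]
    simp only [ultra_map_mul, hp']
    exact hL1 p hp _
  refine ⟨v, ?_, ?_⟩
  · rw [← hvv]
    change ∀ᶠ w in ((v' * p' : Ultrafilter (FreeMonoid (Option Λ))) : Filter (FreeMonoid (Option Λ))), _
    rw [Ultrafilter.eventually_mul]
    filter_upwards [hv'] with w hw
    refine Filter.Eventually.of_forall fun u => ?_
    obtain ⟨w', rfl⟩ := hw
    exact ⟨w' * u, mul_assoc _ _ _⟩
  · intro a b
    obtain ⟨t, ht⟩ := hL2 _ (hvL b) _ (hvL a)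
    rw [ht, mul_assoc, ← ultra_map_mul, hid]

/-- Carlson-Simpson theorem. -/
theorem carlson_simpson (Λ : Type*) [Finite Λ] [Nonempty Λ] (χ : FreeMonoid Λ → Prop) :
    ∃ w0 : FreeMonoid Λ, ∃ v : ℕ → FreeMonoid (Option Λ),
      (∀ k, ∃ w', v k = FreeMonoid.of none * w') ∧
      ((∀ k a, χ (pre w0 v a k)) ∨ (∀ k a, ¬ χ (pre w0 v a k))) := by
  suffices Hs : ∀ u : Ultrafilter (FreeMonoid (Option Λ)),
      (∀ᶠ w in (u : Filter (FreeMonoid (Option Λ))), ∃ w', w = FreeMonoid.of none * w') →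
      (∀ a b : Λ, u.map (subst a) * u.map (subst b) = u.map (subst a)) →
      ∀ a0 : Λ, ∀ A : FreeMonoid Λ → Prop, (∀ᶠ w in u.map (subst a0), A w) →
      ∃ w0 : FreeMonoid Λ, ∃ v : ℕ → FreeMonoid (Option Λ),
      (∀ k, ∃ w', v k = FreeMonoid.of none * w') ∧ (∀ k a, A (pre w0 v a k)) by
    obtain ⟨u, hu1, hu2⟩ := cs_ultra Λ
    obtain ⟨a0⟩ := ‹Nonempty Λ›
    rcases (u.map (subst a0)).eventually_or.1
        (Filter.Eventually.of_forall (fun w => em (χ w))) with h | h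
    · obtain ⟨w0, v, h1, h2⟩ := Hs u hu1 hu2 a0 _ h
      exact ⟨w0, v, h1, Or.inl h2⟩
    · obtain ⟨w0, v, h1, h2⟩ := Hs u hu1 hu2 a0 _ h
      exact ⟨w0, v, h1, Or.inr h2⟩
  intro u hu1 hu2 a0 A hA
  set As : FreeMonoid Λ → Prop := fun w => A w ∧ ∀ a, ∀ᶠ v in u, A (w * subst a v) with hAs
  have key : ∀ a b, ∀ B : FreeMonoid Λ → Prop, (∀ᶠ v in u, B (subst a v)) →
      ∀ᶠ v in u, ∀ᶠ v' in u, B (subst a v * subst b v') := by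
    intro a b B hB
    have h1 : ∀ᶠ w in u.map (subst a), B w := by
      simpa [Ultrafilter.coe_map, Filter.eventually_map] using hB
    rw [← hu2 a b, Ultrafilter.eventually_mul] at h1
    simpa [Ultrafilter.coe_map, Filter.eventually_map] using h1
  have step : ∀ w, As w → ∀ᶠ v in u, ∀ a, As (w * subst a v) := by
    intro w hw
    rw [Filter.eventually_all]
    intro a
    refine (hw.2 a).and ?_
    rw [Filter.eventually_all]
    intro b
    have := key a b (fun x => A (w * x)) (hw.2 a)
    simpa only [mul_assoc] using this
  obtain ⟨w0, hw0⟩ : ∃ w0, As w0 := by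
    have hA' : ∀ᶠ v in u, A (subst a0 v) := by
      simpa [Ultrafilter.coe_map, Filter.eventually_map] using hA
    have h2 : ∀ᶠ v in u, As (subst a0 v) := by
      refine hA'.and ?_
      rw [Filter.eventually_all]
      exact fun b => key a0 b A hA'
    obtain ⟨v, hv⟩ := h2.exists
    exact ⟨_, hv⟩
  have next : ∀ I : {I : Set (FreeMonoid Λ) // I.Finite ∧ ∀ w ∈ I, As w},
      ∃ v : FreeMonoid (Option Λ), (∃ w', v = FreeMonoid.of none * w') ∧
        ∀ w ∈ I.1, ∀ a, As (w * subst a v) := by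
    rintro ⟨I, hI, hIA⟩
    have h1 : ∀ᶠ v in u, ∀ w ∈ I, ∀ a, As (w * subst a v) := by
      rw [Filter.eventually_all_finite hI]
      exact fun w hw => step w (hIA w hw)
    exact (hu1.and h1).exists
  choose nv hnv1 hnv2 using next
  let nextI : {I : Set (FreeMonoid Λ) // I.Finite ∧ ∀ w ∈ I, As w} →
      {I : Set (FreeMonoid Λ) // I.Finite ∧ ∀ w ∈ I, As w} := fun I =>
    ⟨image2 (fun w a => w * subst a (nv I)) I.1 univ,
      Set.Finite.image2 _ I.2.1 finite_univ, by
        rintro _ ⟨w, hw, a, _, rfl⟩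
        exact hnv2 I w hw a⟩
  let Is : ℕ → {I : Set (FreeMonoid Λ) // I.Finite ∧ ∀ w ∈ I, As w} := fun k =>
    nextI^[k] ⟨{w0}, finite_singleton _, by rintro w rfl; exact hw0⟩
  refine ⟨w0, fun k => nv (Is k), fun k => hnv1 _, fun k a => ?_⟩
  have hmem : ∀ k, pre w0 (fun k => nv (Is k)) a k ∈ (Is k).1 := by
    intro k
    induction k with
    | zero => exact rfl
    | succ k ih =>
      have : Is (k+1) = nextI (Is k) := Function.iterate_succ_apply' _ _ _
      rw [this]
      exact ⟨_, ih, a k, mem_univ _, rfl⟩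
  exact ((Is k).2.2 _ (hmem k)).1

/-- Infinite-template form. -/
theorem cs_template (Λ : Type*) [Finite Λ] [Nonempty Λ] (χ : List Λ → Prop) :
    ∃ H : ℕ → Λ ⊕ ℕ, ∃ q : ℕ → ℕ, StrictMono q ∧ (∀ k, H (q k) = Sum.inr k) ∧
      (∀ j k i, j < q k → H j = Sum.inr i → i < k) ∧
      ((∀ k (a : ℕ → Λ), χ ((List.range (q k)).map fun j => Sum.elim id a (H j))) ∨
       (∀ k (a : ℕ → Λ), ¬ χ ((List.range (q k)).map fun j => Sum.elim id a (H j)))) := by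
  obtain ⟨w0, v, hv, hχ⟩ := carlson_simpson Λ (fun w => χ w.toList)
  let tv : ℕ → List (Λ ⊕ ℕ) := fun k => (v k).toList.map fun o => o.elim (Sum.inr k) Sum.inl
  let T : ℕ → List (Λ ⊕ ℕ) := fun k => Nat.rec (w0.toList.map Sum.inl) (fun k t => t ++ tv k) k
  have T0 : T 0 = w0.toList.map Sum.inl := rfl
  have Ts : ∀ k, T (k+1) = T k ++ tv k := fun k => rfl
  have htv : ∀ k, ∃ t, tv k = Sum.inr k :: t := by
    intro k
    obtain ⟨w', hw'⟩ := hv k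
    refine ⟨w'.toList.map fun o => o.elim (Sum.inr k) Sum.inl, ?_⟩
    simp only [tv, hw']
    simp
  have hq : StrictMono fun k => (T k).length := by
    refine strictMono_nat_of_lt_succ fun k => ?_
    obtain ⟨t, ht⟩ := htv k
    simp [Ts, ht]
  have hpre : ∀ k m, k ≤ m → T k <+: T m := by
    intro k m hkm
    induction m, hkm using Nat.le_induction with
    | base => exact List.prefix_rfl
    | succ m _ ih => exact ih.trans (by rw [Ts]; exact List.prefix_append _ _)
  have hlen : ∀ j, j < (T (j+1)).length := fun j => lt_of_lt_of_le (Nat.lt_succ_self j) (hq.id_le (j+1))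
  let H : ℕ → Λ ⊕ ℕ := fun j => (T (j+1))[j]'(hlen j)
  have hH : ∀ j k (h : j < (T k).length), H j = (T k)[j] := by
    intro j k h
    simp only [H]
    rcases le_total (j+1) k with h1 | h1
    · exact (hpre _ _ h1).getElem _
    · exact ((hpre _ _ h1).getElem _).symm
  have hmap : ∀ k, (List.range (T k).length).map H = T k := by
    intro k
    apply List.ext_getElem
    · simp
    · intro i h1 h2
      simp [hH i k h2]
  refine ⟨H, fun k => (T k).length, hq, ?_, ?_, ?_⟩
  · intro k
    obtain ⟨t, ht⟩ := htv k
    rw [hH _ (k+1) (hq (Nat.lt_succ_self k))]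
    simp [Ts, ht]
  · have : ∀ k i, Sum.inr i ∈ T k → i < k := by
      intro k
      induction k with
      | zero => simp [T0]
      | succ k ih =>
        intro i hi
        rw [Ts, List.mem_append] at hi
        rcases hi with hi | hi
        · exact (ih i hi).trans (Nat.lt_succ_self k)
        · simp only [tv, List.mem_map] at hi
          obtain ⟨o, -, ho⟩ := hi
          cases o with
          | none => simp at ho; omega
          | some x => simp at ho
    intro j k i hj hi
    apply this
    rw [← hi, hH j k hj]
    exact List.getElem_mem _
  · have e : ∀ k (a : ℕ → Λ), (List.range (T k).length).map (fun j => Sum.elim id a (H j))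
        = (pre w0 v a k).toList := by
      intro k a
      have : (List.range (T k).length).map (fun j => Sum.elim id a (H j))
        = ((List.range (T k).length).map H).map (Sum.elim id a) := by simp
      rw [this, hmap]
      induction k with
      | zero => simp [T0, pre]
      | succ k ih =>
        rw [Ts, List.map_append, ih (by simp)]
        simp only [pre, FreeMonoid.toList_mul, subst, FreeMonoid.toList_map, tv, List.map_map]
        congr 1
        apply List.map_congr_left
        intro o _
        cases o <;> simp
    simpa only [e] using hχ

end CS


section RMsec

/-- Rigid surjections of ℕ preserving residues mod `l`. -/
structure RM (l : ℕ) where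
  f : ℕ → ℕ
  pos : ℕ → ℕ
  f_pos : ∀ k, f (pos k) = k
  f_lt : ∀ k i, i < pos k → f i < k
  pos_mod : ∀ k, pos k % l = k % l

variable {l : ℕ}

theorem RM.ext' {g h : RM l} (e : ∀ i, g.f i = h.f i) : g = h := by
  have hp : g.pos = h.pos := by
    funext k
    rcases lt_trichotomy (g.pos k) (h.pos k) with h1 | h1 | h1
    · have := h.f_lt k _ h1
      rw [← e, g.f_pos] at this
      omega
    · exact h1
    · have := g.f_lt k _ h1
      rw [e, h.f_pos] at this
      omega
  have hf : g.f = h.f := funext e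
  cases g; cases h
  simp only at hp hf
  subst hp hf
  rfl

theorem RM.pos_strictMono (g : RM l) : StrictMono g.pos := by
  refine strictMono_nat_of_lt_succ fun k => ?_
  by_contra hc
  rcases lt_or_eq_of_le (not_lt.1 hc) with h | h
  · have := g.f_lt k _ h
    rw [g.f_pos] at this
    omega
  · have := congrArg g.f h
    rw [g.f_pos, g.f_pos] at this
    omega

theorem RM.f_le (g : RM l) (i : ℕ) : g.f i ≤ i := by
  have h1 : i < g.pos (i+1) := lt_of_lt_of_le (Nat.lt_succ_self i) (g.pos_strictMono.id_le (i+1))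
  have := g.f_lt _ _ h1
  omega

theorem RM.le_pos (g : RM l) (i : ℕ) : i ≤ g.pos i := g.pos_strictMono.id_le i

theorem RM.pos_f_le (g : RM l) (i : ℕ) : g.pos (g.f i) ≤ i := by
  by_contra hc
  have := g.f_lt _ _ (not_le.1 hc)
  omega

/-- `pos` is determined by its characterization. -/
theorem RM.pos_eq (g : RM l) {k i : ℕ} (h1 : g.f i = k) (h2 : ∀ j < i, g.f j ≠ k) :
    g.pos k = i := by
  rcases lt_trichotomy (g.pos k) i with h | h | h
  · exact absurd (g.f_pos k) (h2 _ h)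
  · exact h
  · have := g.f_lt k i h
    omega

instance : One (RM l) := ⟨⟨id, id, fun _ => rfl, fun _ _ h => h, fun _ => rfl⟩⟩

instance : Mul (RM l) := ⟨fun g h =>
  { f := fun i => g.f (h.f i)
    pos := fun k => h.pos (g.pos k)
    f_pos := fun k => by rw [h.f_pos, g.f_pos]
    f_lt := fun k i hi => g.f_lt _ _ (h.f_lt _ _ hi)
    pos_mod := fun k => by rw [h.pos_mod, g.pos_mod] }⟩

@[simp] theorem RM.mul_f (g h : RM l) (i : ℕ) : (g * h).f i = g.f (h.f i) := rfl
@[simp] theorem RM.mul_pos (g h : RM l) (i : ℕ) : (g * h).pos i = h.pos (g.pos i) := rfl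
@[simp] theorem RM.one_f (i : ℕ) : (1 : RM l).f i = i := rfl
@[simp] theorem RM.one_pos (i : ℕ) : (1 : RM l).pos i = i := rfl

instance : Monoid (RM l) where
  mul_assoc a b c := rfl
  one_mul a := rfl
  mul_one a := rfl

/-- The submonoids fixing `0..n`. -/
def Kn (l n : ℕ) : Submonoid (RM l) where
  carrier := {h | ∀ i, i ≤ n → h.f i = i}
  one_mem' := fun i _ => rfl
  mul_mem' := by
    intro a b ha hb i hi
    rw [RM.mul_f, hb i hi, ha i hi]

theorem mem_Kn {n : ℕ} {h : RM l} : h ∈ Kn l n ↔ ∀ i, i ≤ n → h.f i = i := Iff.rfl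

theorem Kn_pos {n : ℕ} {h : RM l} (hh : h ∈ Kn l n) {i : ℕ} (hi : i ≤ n) : h.pos i = i := by
  apply h.pos_eq (hh i hi)
  intro j hj
  rw [hh j (by omega)]
  omega

theorem Kn_anti : Antitone (Kn l) := fun _ _ hmn _ hh i hi => hh i (hi.trans hmn)

/-- `t` is a finite element: after `d = pos n` it is a shift. -/
def IsFin (t : RM l) (n d : ℕ) : Prop := t.pos n = d ∧ ∀ j, t.f (d + j) = n + j

theorem trunc_factor {t f : RM l} {n d : ℕ} (ht : IsFin t n d) (hp : f.pos n = d)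
    (hf : ∀ i < d, f.f i = t.f i) : ∃ k ∈ Kn l n, f = k * t := by
  have hnd : n ≤ d := hp ▸ f.le_pos n
  have hmod : d % l = n % l := hp ▸ f.pos_mod n
  have hfd : f.f d = n := hp ▸ f.f_pos n
  have hpge : ∀ k, n ≤ k → d ≤ f.pos k := fun k hk => hp ▸ f.pos_strictMono.monotone hk
  refine ⟨⟨fun i => if i ≤ n then i else f.f (d + (i - n)),
    fun k => if k ≤ n then k else n + (f.pos k - d), ?_, ?_, ?_⟩, ?_, ?_⟩
  · intro k
    by_cases hk : k ≤ n
    · simp [hk]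
    · have h1 := hpge k (by omega)
      have h2 : f.pos n < f.pos k := f.pos_strictMono (by omega)
      simp only [hk, if_false]
      rw [if_neg (by omega)]
      rw [show d + (n + (f.pos k - d) - n) = f.pos k by omega, f.f_pos]
  · intro k i hi
    by_cases hk : k ≤ n
    · simp only [hk, if_true] at hi
      rw [if_pos (by omega)]
      exact hi
    · have h1 := hpge k (by omega)
      simp only [hk, if_false] at hi
      split_ifs with h2
      · omega
      · exact f.f_lt _ _ (by omega)
  · intro k
    by_cases hk : k ≤ n
    · simp [hk]
    · have h1 := hpge k (by omega)
      simp only [hk, if_false]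
      have h2 := f.pos_mod k
      have h3 : n + (f.pos k - d) + d = f.pos k + n := by omega
      have h4 : (n + (f.pos k - d)) + d ≡ k + d [MOD l] := by
        rw [h3]
        exact Nat.ModEq.add h2 hmod.symm
      exact Nat.ModEq.add_right_cancel' d h4
  · intro i hi
    simp [hi]
  · apply RM.ext'
    intro i
    simp only [RM.mul_f]
    by_cases hi : i < d
    · have h1 : t.f i < n := t.f_lt n i (by rw [ht.1]; exact hi)
      rw [if_pos (by omega), hf i hi]
    · obtain ⟨j, rfl⟩ := Nat.exists_eq_add_of_le (not_lt.1 hi)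
      rw [ht.2]
      split_ifs with h
      · have : j = 0 := by omega
        subst this
        simpa using hfd
      · congr 1
        omega

theorem exists_trunc (f : RM l) (n : ℕ) : ∃ t : RM l, IsFin t n (f.pos n) ∧
    ∀ i < f.pos n, f.f i = t.f i := by
  have hnd : n ≤ f.pos n := f.le_pos n
  have hmod := f.pos_mod n
  refine ⟨⟨fun i => if i < f.pos n then f.f i else n + (i - f.pos n),
    fun k => if k < n then f.pos k else f.pos n + (k - n), ?_, ?_, ?_⟩, ⟨?_, ?_⟩, ?_⟩
  · intro k
    by_cases hk : k < n
    · have := f.pos_strictMono hk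
      simp [hk, this, f.f_pos]
    · simp [hk]
      omega
  · intro k i hi
    by_cases hk : k < n
    · simp only [hk, if_true] at hi
      have := f.pos_strictMono hk
      rw [if_pos (by omega)]
      exact f.f_lt _ _ hi
    · simp only [hk, if_false] at hi
      split_ifs with h2
      · have := f.f_lt _ _ h2
        omega
      · omega
  · intro k
    by_cases hk : k < n
    · simp [hk, f.pos_mod]
    · simp only [hk, if_false]
      have : f.pos n + (k - n) ≡ n + (k - n) [MOD l] := Nat.ModEq.add_right _ hmod
      rwa [show n + (k - n) = k by omega] at this
  · simp
  · intro j
    simp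
  · intro i hi
    simp [hi]

theorem fin_commute {t h : RM l} {n d : ℕ} (ht : IsFin t n d) (hh : h ∈ Kn l d) :
    ∃ h' ∈ Kn l n, t * h = h' * t := by
  apply trunc_factor ht
  · rw [RM.mul_pos, ht.1, Kn_pos hh le_rfl]
  · intro i hi
    rw [RM.mul_f, hh i hi.le]

theorem fin_lift {t h' : RM l} {n d : ℕ} (ht : IsFin t n d) (hh : h' ∈ Kn l n) :
    ∃ h ∈ Kn l d, t * h = h' * t := by
  have hnd : n ≤ d := ht.1 ▸ t.le_pos n
  have hmod : d % l = n % l := ht.1 ▸ t.pos_mod n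
  have htp : ∀ v, v < n → t.pos v < d := fun v hv => ht.1 ▸ t.pos_strictMono hv
  refine ⟨⟨fun i => if i ≤ d then i else
      if h'.f (n + (i - d)) < n then t.pos (h'.f (n + (i - d))) else d + (h'.f (n + (i - d)) - n),
    fun k => if k ≤ d then k else d + (h'.pos (n + (k - d)) - n), ?_, ?_, ?_⟩, ?_, ?_⟩
  · intro k
    by_cases hk : k ≤ d
    · simp [hk]
    · have h1 := h'.le_pos (n + (k - d))
      simp only [hk, if_false]
      rw [if_neg (by omega),
        show n + (d + (h'.pos (n + (k - d)) - n) - d) = h'.pos (n + (k - d)) by omega, h'.f_pos,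
        if_neg (by omega)]
      omega
  · intro k i hi
    by_cases hk : k ≤ d
    · simp only [hk, if_true] at hi
      rw [if_pos (by omega)]
      exact hi
    · simp only [hk, if_false] at hi
      have h1 := h'.le_pos (n + (k - d))
      split_ifs with h2 h3
      · omega
      · have := htp _ h3
        omega
      · have := h'.f_lt (n + (k - d)) (n + (i - d)) (by omega)
        omega
  · intro k
    by_cases hk : k ≤ d
    · simp [hk]
    · simp only [hk, if_false]
      have h1 := h'.le_pos (n + (k - d))
      have h2 := h'.pos_mod (n + (k - d))
      have h4 : (d + (h'.pos (n + (k - d)) - n)) + n ≡ k + n [MOD l] := by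
        rw [show (d + (h'.pos (n + (k - d)) - n)) + n = d + h'.pos (n + (k - d)) by omega,
          show k + n = d + (n + (k - d)) by omega]
        exact Nat.ModEq.add_left d h2
      exact Nat.ModEq.add_right_cancel' n h4
  · intro i hi
    simp [hi]
  · apply RM.ext'
    intro i
    simp only [RM.mul_f]
    by_cases hi : i ≤ d
    · have h1 : t.f i ≤ n := by
        rcases Nat.lt_or_eq_of_le hi with h | h
        · exact (t.f_lt n i (by rw [ht.1]; exact h)).le
        · have := ht.2 0
          rw [h]
          simp at this
          omega
      rw [if_pos hi, hh _ h1]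
    · have h2 := ht.2 (i - d)
      rw [show d + (i - d) = i by omega] at h2
      rw [if_neg hi, h2]
      split_ifs with h3
      · rw [t.f_pos]
      · rw [ht.2]
        omega

theorem fin_finite (d : ℕ) : {p : RM l × ℕ | IsFin p.1 p.2 d}.Finite := by
  apply Set.Finite.of_injOn (f := fun p : RM l × ℕ => fun i : Fin (d+1) =>
    (⟨p.1.f i, lt_of_le_of_lt (p.1.f_le i) i.2⟩ : Fin (d+1))) (mapsTo_univ _ _) ?_ finite_univ
  rintro ⟨t, n⟩ ht ⟨t', n'⟩ ht' e
  have ht : IsFin t n d := ht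
  have ht' : IsFin t' n' d := ht'
  have e1 : ∀ i, i ≤ d → t.f i = t'.f i := by
    intro i hi
    have := congrFun e ⟨i, by omega⟩
    simpa using this
  have hn : n = n' := by
    have h1 := ht.2 0
    have h2 := ht'.2 0
    have h3 := e1 d le_rfl
    simp at h1 h2
    omega
  subst hn
  have : t = t' := by
    apply RM.ext'
    intro i
    by_cases hi : i ≤ d
    · exact e1 i hi
    · have h1 := ht.2 (i - d)
      have h2 := ht'.2 (i - d)
      rw [show d + (i - d) = i by omega] at h1 h2
      omega
  rw [this]

/-- products `h (i+m-1) * ... * h i`. -/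
def tprod (h : ℕ → RM l) (i : ℕ) : ℕ → RM l
  | 0 => 1
  | m+1 => h (i+m) * tprod h i m

theorem tprod_succ' (h : ℕ → RM l) (i m : ℕ) : tprod h i (m+1) = tprod h (i+1) m * h i := by
  induction m with
  | zero => rfl
  | succ m ih =>
    rw [tprod, ih, tprod, mul_assoc, show i + (m+1) = i + 1 + m by omega]

theorem tail_limit (N : ℕ) (h : ℕ → RM l) (hh : ∀ i, h i ∈ Kn l (N + i)) :
    ∃ T : ℕ → RM l, (∀ i, T i ∈ Kn l (N+i)) ∧ ∀ i, T i = T (i+1) * h i := by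
  have st : ∀ i x m, x ≤ m → (tprod h i m).f x = (tprod h i x).f x := by
    intro i x m hm
    induction m, hm using Nat.le_induction with
    | base => rfl
    | succ m hm ih =>
      rw [tprod, RM.mul_f, hh, ih]
      have := (tprod h i m).f_le x
      omega
  have stp : ∀ i x m, x ≤ m → (tprod h i m).pos x = (tprod h i x).pos x := by
    intro i x m hm
    induction m, hm using Nat.le_induction with
    | base => rfl
    | succ m hm ih =>
      rw [tprod, RM.mul_pos, Kn_pos (hh _) (by omega), ih]
  have hK : ∀ i m, tprod h i m ∈ Kn l (N+i) := by
    intro i m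
    induction m with
    | zero => exact one_mem _
    | succ m ih => exact mul_mem (Kn_anti (by omega) (hh (i+m))) ih
  refine ⟨fun i => ⟨fun x => (tprod h i x).f x, fun k => (tprod h i k).pos k, ?_, ?_, ?_⟩, ?_, ?_⟩
  · intro k
    have h3 := (tprod h i ((tprod h i k).pos k)).f_pos k
    rw [stp i k _ (RM.le_pos _ _)] at h3
    exact h3
  · intro k x hx
    rw [← stp i k (max k x) (le_max_left _ _)] at hx
    rw [← st i x (max k x) (le_max_right _ _)]
    exact RM.f_lt _ _ _ hx
  · intro k
    exact RM.pos_mod _ _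
  · intro i x hx
    exact hK i x x hx
  · intro i
    apply RM.ext'
    intro x
    simp only [RM.mul_f]
    rw [← st i x (x+1) (Nat.le_succ x), tprod_succ', RM.mul_f]
    exact st _ _ _ ((h i).f_le x)

theorem fusion {S : Type*} [MulAction (RM l) S] (Q : ℕ → S → Prop)
    (Qh : ∀ n f, Q n f → ∀ h ∈ Kn l n, Q n (h • f))
    (Qd : ∀ n f, ∃ h ∈ Kn l n, Q n (h • f)) (N : ℕ) (g : S) :
    ∃ h ∈ Kn l N, ∀ n, N ≤ n → ∀ f ∈ Kn l N, Q n (f • h • g) := by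
  set D : ℕ → S → Prop := fun d f => ∀ p ∈ {p : RM l × ℕ | IsFin p.1 p.2 d}, Q p.2 (p.1 • f) with hD
  have one_h : ∀ (t : RM l) n d (f : S), IsFin t n d → Q n (t • f) → ∀ h ∈ Kn l d, Q n (t • h • f) := by
    intro t n d f ht hq h hh
    obtain ⟨h', hh', e⟩ := fin_commute ht hh
    rw [← mul_smul, e, mul_smul]
    exact Qh _ _ hq _ hh'
  have Dh : ∀ d f, D d f → ∀ h ∈ Kn l d, D d (h • f) := by
    intro d f hf h hh p hp
    exact one_h _ _ _ _ hp (hf p hp) h hh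
  have Dd : ∀ d f, ∃ h ∈ Kn l d, D d (h • f) := by
    intro d f
    refine Set.Finite.induction_on_subset
      (motive := fun (s : Set (RM l × ℕ)) _ => ∃ h ∈ Kn l d, ∀ p ∈ s, Q p.2 (p.1 • h • f)) _ (fin_finite d) ?_ ?_
    · exact ⟨1, one_mem _, by simp⟩
    · rintro ⟨t, n⟩ s ht hs - ⟨h, hh, h1⟩
      obtain ⟨h', hh', h2⟩ := Qd n (t • h • f)
      obtain ⟨k, hk, e⟩ := fin_lift ht hh'
      refine ⟨k * h, mul_mem hk hh, ?_⟩
      rintro p (rfl | hp)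
      · rw [mul_smul, ← mul_smul, e, mul_smul]
        exact h2
      · rw [mul_smul]
        exact one_h _ _ _ _ (hs hp) (h1 p hp) k hk
  choose nh hnh1 hnh2 using Dd
  let gs : ℕ → S := fun i => Nat.rec g (fun i x => nh (N+i) x • x) i
  have gs0 : gs 0 = g := rfl
  have gss : ∀ i, gs (i+1) = nh (N+i) (gs i) • gs i := fun i => rfl
  obtain ⟨T, hT1, hT2⟩ := tail_limit N (fun i => nh (N+i) (gs i)) (fun i => hnh1 _ _)
  have hTg : ∀ i, T i • gs i = T 0 • g := by
    intro i
    induction i with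
    | zero => rfl
    | succ i ih => rw [← ih, hT2 i, mul_smul, gss]
  have hTD : ∀ d, N ≤ d → D d (T 0 • g) := by
    intro d hd
    obtain ⟨i, rfl⟩ := Nat.exists_eq_add_of_le hd
    rw [← hTg (i+1)]
    refine Dh _ _ ?_ _ (Kn_anti (by omega) (hT1 (i+1)))
    rw [gss]
    exact hnh2 _ _
  refine ⟨T 0, hT1 0, ?_⟩
  intro n hn f _
  obtain ⟨t, ht, hte⟩ := exists_trunc f n
  obtain ⟨k, hk, rfl⟩ := trunc_factor ht rfl hte
  rw [mul_smul]
  refine Qh _ _ ?_ _ hk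
  exact hTD _ (hn.trans (RM.le_pos _ n)) (t, n) ht

end RMsec

section Pigeon

variable {l : ℕ}

/-- The element of `Kn l n` given by a finite word. -/
def fw (hl : 0 < l) (n : ℕ) (w : List (Fin l → Fin (n+1))) : RM l where
  f m := if m ≤ n then m else
    if hj : (m - (n+1)) / l < w.length then
      ((w[(m - (n+1)) / l]'hj) ⟨(m - (n+1)) % l, Nat.mod_lt _ hl⟩ : ℕ)
    else m - l * w.length
  pos k := if k ≤ n then k else k + l * w.length
  f_pos k := by
    by_cases hk : k ≤ n
    · simp [hk]
    · simp only [hk, if_false]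
      rw [if_neg (by omega), dif_neg]
      · omega
      · rw [Nat.div_lt_iff_lt_mul hl, mul_comm]
        omega
  f_lt k i hi := by
    by_cases hk : k ≤ n
    · simp only [hk, if_true] at hi
      rw [if_pos (by omega)]
      exact hi
    · simp only [hk, if_false] at hi
      split_ifs with h1 h2
      · omega
      · have := ((w[(i - (n+1)) / l]'h2) ⟨(i - (n+1)) % l, Nat.mod_lt _ hl⟩).2
        omega
      · omega
  pos_mod k := by
    split_ifs <;> simp

theorem fw_mem (hl : 0 < l) (n : ℕ) (w : List (Fin l → Fin (n+1))) : fw hl n w ∈ Kn l n := by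
  intro i hi
  simp [fw, hi]

theorem fw_isFin (hl : 0 < l) (n : ℕ) (w : List (Fin l → Fin (n+1))) :
    IsFin (fw hl n w) (n+1) (n + 1 + l * w.length) := by
  constructor
  · simp [fw]
  · intro j
    simp only [fw]
    rw [if_neg (by omega), dif_neg]
    · omega
    · rw [Nat.div_lt_iff_lt_mul hl, mul_comm]
      omega

/-- The element of `Kn l n` given by an infinite template. -/
def tm (hl : 0 < l) (n : ℕ) (H : ℕ → (Fin l → Fin (n+1)) ⊕ ℕ) (q : ℕ → ℕ) (hq : StrictMono q)
    (h1 : ∀ k, H (q k) = Sum.inr k) (h2 : ∀ j k i, j < q k → H j = Sum.inr i → i < k) : RM l where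
  f m := if m ≤ n then m else
    Sum.elim (fun v => (v ⟨(m - (n+1)) % l, Nat.mod_lt _ hl⟩ : ℕ))
      (fun i => n + 1 + l * i + (m - (n+1)) % l) (H ((m - (n+1)) / l))
  pos k := if k ≤ n then k else n + 1 + l * q ((k - (n+1)) / l) + (k - (n+1)) % l
  f_pos k := by
    by_cases hk : k ≤ n
    · simp [hk]
    · simp only [hk, if_false]
      obtain ⟨x, rfl⟩ := Nat.exists_eq_add_of_le (show n + 1 ≤ k by omega)
      rw [if_neg (by omega)]
      simp only [add_assoc (n+1), Nat.add_sub_cancel_left]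
      have hd : (l * q (x / l) + x % l) / l = q (x / l) := by
        rw [Nat.mul_add_div hl, Nat.div_eq_of_lt (Nat.mod_lt x hl)]; rfl
      rw [hd, h1]
      simp only [Sum.elim_inr]
      rw [Nat.mul_add_mod, Nat.mod_mod, Nat.div_add_mod]
  f_lt k i hi := by
    by_cases hk : k ≤ n
    · simp only [hk, if_true] at hi
      rw [if_pos (by omega)]
      exact hi
    · simp only [hk, if_false] at hi
      split_ifs with hin
      · omega
      obtain ⟨x, rfl⟩ := Nat.exists_eq_add_of_le (show n + 1 ≤ k by omega)
      obtain ⟨y, rfl⟩ := Nat.exists_eq_add_of_le (show n + 1 ≤ i by omega)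
      simp only [Nat.add_sub_cancel_left] at hi ⊢
      have hx := Nat.div_add_mod x l
      have hy := Nat.div_add_mod y l
      have hxl := Nat.mod_lt x hl
      have hyl := Nat.mod_lt y hl
      generalize hX : x / l = X at *
      generalize hY : y / l = Y at *
      have hYX : Y ≤ q X := by
        by_contra hc
        have : l * (q X + 1) ≤ l * Y := Nat.mul_le_mul_left l (by omega)
        rw [mul_add, mul_one] at this
        omega
      rcases hHY : H Y with v | i'
      · simp only [Sum.elim_inl]
        have := (v ⟨y % l, Nat.mod_lt _ hl⟩).2
        omega
      · simp only [Sum.elim_inr]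
        rcases Nat.lt_or_eq_of_le hYX with h | h
        · have h3 := h2 _ _ _ h hHY
          have : l * (i' + 1) ≤ l * X := Nat.mul_le_mul_left l (by omega)
          rw [mul_add, mul_one] at this
          omega
        · rw [h, h1] at hHY
          have : X = i' := by simpa using hHY
          subst this
          subst h
          omega
  pos_mod k := by
    by_cases hk : k ≤ n
    · simp [hk]
    · simp only [hk, if_false]
      obtain ⟨x, rfl⟩ := Nat.exists_eq_add_of_le (show n + 1 ≤ k by omega)
      simp only [Nat.add_sub_cancel_left]
      have e : n + 1 + l * q (x / l) + x % l = (n + 1 + x % l) + l * q (x / l) := by ring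
      rw [e, Nat.add_mul_mod_self_left]
      exact Nat.ModEq.add_left (n+1) (Nat.mod_modEq x l)

theorem pigeon (hl : 0 < l) (n : ℕ) (c : RM l → Prop)
    (hc : ∀ f ∈ Kn l n, ∀ h ∈ Kn l (n+1), (c (h * f) ↔ c f)) :
    ∃ h ∈ Kn l n, (∀ f ∈ Kn l n, c (f * h)) ∨ (∀ f ∈ Kn l n, ¬ c (f * h)) := by
  obtain ⟨H, q, hq, h1, h2, hχ⟩ := cs_template (Fin l → Fin (n+1)) (fun w => c (fw hl n w))
  have key : ∀ f ∈ Kn l n, ∃ m, ∃ a : ℕ → (Fin l → Fin (n+1)),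
      (c (f * tm hl n H q hq h1 h2) ↔
        c (fw hl n ((List.range (q m)).map fun j => Sum.elim id a (H j)))) := by
    intro f hf
    obtain ⟨x, hx⟩ := Nat.exists_eq_add_of_le (f.le_pos (n+1))
    have hxl : l ∣ x := by
      have h3 := f.pos_mod (n+1)
      rw [hx] at h3
      have h4 : n + 1 + x ≡ n + 1 + 0 [MOD l] := h3
      exact (Nat.modEq_zero_iff_dvd).1 (Nat.ModEq.add_left_cancel' _ h4)
    obtain ⟨m, rfl⟩ := hxl
    let a : ℕ → (Fin l → Fin (n+1)) := fun i r => ⟨min (f.f (n + 1 + l * i + r)) n, by omega⟩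
    refine ⟨m, a, ?_⟩
    set w := (List.range (q m)).map fun j => Sum.elim id a (H j) with hw
    have hwl : w.length = q m := by simp [hw]
    obtain ⟨g, hg, e⟩ := trunc_factor (f := f * tm hl n H q hq h1 h2) (fw_isFin hl n w) (by
      rw [RM.mul_pos, hx, hwl]
      simp only [tm]
      rw [if_neg (by omega)]
      simp [hl]) (by
      intro i hi
      rw [hwl] at hi
      rw [RM.mul_f]
      by_cases hin : i ≤ n
      · simp only [tm, fw, hin, if_true]
        exact hf i hin
      · obtain ⟨y, rfl⟩ := Nat.exists_eq_add_of_le (show n + 1 ≤ i by omega)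
        simp only [tm, fw, hin, if_false, Nat.add_sub_cancel_left]
        have hyq : y / l < q m := by
          rw [Nat.div_lt_iff_lt_mul hl, mul_comm]
          omega
        rw [dif_pos (by rw [hwl]; exact hyq)]
        have hget : ∀ j (hj : j < w.length), w[j] = Sum.elim id a (H j) := by
          intro j hj
          simp [hw]
        rw [hget]
        simp only [Nat.add_sub_cancel_left]
        rcases hHY : H (y / l) with v | i'
        · simp only [Sum.elim_inl, id]
          exact hf _ (by have := (v ⟨y % l, Nat.mod_lt _ hl⟩).2; omega)
        · simp only [Sum.elim_inr, a]
          have h3 := h2 _ _ _ hyq hHY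
          have h4 : l * (i' + 1) ≤ l * m := Nat.mul_le_mul_left l (by omega)
          rw [mul_add, mul_one] at h4
          have h5 := f.f_lt (n+1) (n + 1 + l * i' + y % l)
            (by have := Nat.mod_lt y hl; omega)
          omega)
    rw [e]
    exact hc _ (fw_mem hl n w) g hg
  refine ⟨tm hl n H q hq h1 h2, fun i hi => by simp [tm, hi], ?_⟩
  rcases hχ with hχ | hχ
  · left
    intro f hf
    obtain ⟨m, a, e⟩ := key f hf
    exact e.2 (hχ m a)
  · right
    intro f hf
    obtain ⟨m, a, e⟩ := key f hf
    exact fun h => hχ m a (e.1 h)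

end Pigeon

section Space

theorem minReps_unique {E : Setoid ℕ} {x y : ℕ} (hx : x ∈ minReps E) (hy : y ∈ minReps E)
    (h : E.r x y) : x = y := le_antisymm (hx y h) (hy x (E.symm h))

theorem exists_minRep (E : Setoid ℕ) (a : ℕ) : ∃ m ∈ minReps E, E.r a m ∧ m ≤ a := by
  classical
  have hex : ∃ m, E.r a m := ⟨a, E.refl a⟩
  refine ⟨Nat.find hex, ?_, Nat.find_spec hex, Nat.find_min' hex (E.refl a)⟩
  intro m hm
  exact Nat.find_min' hex (E.trans (Nat.find_spec hex) hm)

theorem minReps_infinite {E : Setoid ℕ} (h : (classes E).Infinite) : (minReps E).Infinite := by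
  intro hf
  apply h
  refine (hf.image (fun x => {y | E.r x y})).subset ?_
  rintro C ⟨x, rfl⟩
  obtain ⟨m, hm, hxm, -⟩ := exists_minRep E x
  refine ⟨m, hm, ?_⟩
  ext y
  exact ⟨fun h => E.trans hxm h, fun h => E.trans (E.symm hxm) h⟩

/-- index of the class of `a`. -/
noncomputable def idx (E : Setoid ℕ) (a : ℕ) : ℕ := sInf {k | E.r a (pRep E k)}

theorem pRep_mem {E : Setoid ℕ} (h : (minReps E).Infinite) (k : ℕ) : pRep E k ∈ minReps E :=
  Nat.nth_mem_of_infinite (p := (· ∈ minReps E)) h k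

theorem pRep_strictMono {E : Setoid ℕ} (h : (minReps E).Infinite) : StrictMono (pRep E) :=
  Nat.nth_strictMono (p := (· ∈ minReps E)) h

theorem exists_pRep {E : Setoid ℕ} (h : (minReps E).Infinite) {x : ℕ} (hx : x ∈ minReps E) :
    ∃ k, pRep E k = x := by
  have h1 : x ∈ Set.range (Nat.nth (· ∈ minReps E)) := by
    rw [Nat.range_nth_of_infinite (p := (· ∈ minReps E)) h]
    exact hx
  exact h1

theorem idx_rel {E : Setoid ℕ} (h : (minReps E).Infinite) (a : ℕ) : E.r a (pRep E (idx E a)) := by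
  obtain ⟨m, hm, ham, -⟩ := exists_minRep E a
  obtain ⟨k, rfl⟩ := exists_pRep h hm
  exact Nat.sInf_mem (s := {k | E.r a (pRep E k)}) ⟨k, ham⟩

theorem idx_eq {E : Setoid ℕ} (h : (minReps E).Infinite) {a k : ℕ} (hk : E.r a (pRep E k)) :
    idx E a = k := by
  apply (pRep_strictMono h).injective
  apply minReps_unique (pRep_mem h _) (pRep_mem h _)
  exact E.trans (E.symm (idx_rel h a)) hk

theorem idx_pRep {E : Setoid ℕ} (h : (minReps E).Infinite) (k : ℕ) : idx E (pRep E k) = k :=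
  idx_eq h (E.refl _)

theorem pRep_idx_le {E : Setoid ℕ} (h : (minReps E).Infinite) (a : ℕ) : pRep E (idx E a) ≤ a :=
  pRep_mem h _ a (E.symm (idx_rel h a))

theorem idx_lt {E : Setoid ℕ} (h : (minReps E).Infinite) {a k : ℕ} (hk : a < pRep E k) :
    idx E a < k :=
  (pRep_strictMono h).lt_iff_lt.1 (lt_of_le_of_lt (pRep_idx_le h a) hk)

theorem rel_iff_idx {E : Setoid ℕ} (h : (minReps E).Infinite) (a b : ℕ) :
    E.r a b ↔ idx E a = idx E b := by
  constructor
  · intro hab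
    exact idx_eq h (E.trans hab (idx_rel h b))
  · intro e
    have h1 := idx_rel h a
    rw [e] at h1
    exact E.trans h1 (E.symm (idx_rel h b))

theorem ker_minReps {φ pos : ℕ → ℕ} (h1 : ∀ k, φ (pos k) = k) (h2 : ∀ k i, i < pos k → φ i < k) :
    minReps (Setoid.ker φ) = range pos ∧ StrictMono pos := by
  have hm : StrictMono pos := by
    refine strictMono_nat_of_lt_succ fun k => ?_
    by_contra hc
    rcases lt_or_eq_of_le (not_lt.1 hc) with h | h
    · have := h2 k _ h
      rw [h1] at this
      omega
    · have := congrArg φ h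
      rw [h1, h1] at this
      omega
  refine ⟨?_, hm⟩
  ext x
  constructor
  · intro hx
    have h3 : x ≤ pos (φ x) := hx _ (by show φ x = φ (pos (φ x)); rw [h1])
    refine ⟨φ x, le_antisymm ?_ h3⟩
    by_contra hc
    have := h2 _ _ (not_le.1 hc)
    omega
  · rintro ⟨k, rfl⟩ m hmk
    have hmk : φ (pos k) = φ m := hmk
    rw [h1] at hmk
    by_contra hc
    have := h2 _ _ (not_le.1 hc)
    omega

theorem ker_facts {φ pos : ℕ → ℕ} (h1 : ∀ k, φ (pos k) = k) (h2 : ∀ k i, i < pos k → φ i < k) :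
    (minReps (Setoid.ker φ)).Infinite ∧ pRep (Setoid.ker φ) = pos ∧ idx (Setoid.ker φ) = φ := by
  obtain ⟨hr, hm⟩ := ker_minReps h1 h2
  have hinf : (minReps (Setoid.ker φ)).Infinite := by
    rw [hr]
    exact infinite_range_of_injective hm.injective
  have hp : pRep (Setoid.ker φ) = pos := by
    apply StrictMono.range_inj (pRep_strictMono hinf) hm |>.1
    rw [← hr]
    ext x
    exact ⟨by rintro ⟨k, rfl⟩; exact pRep_mem hinf k, fun hx => exists_pRep hinf hx⟩
  refine ⟨hinf, hp, ?_⟩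
  funext a
  apply idx_eq hinf
  rw [hp]
  show φ a = φ (pos (φ a))
  rw [h1]

theorem classes_infinite {E : Setoid ℕ} (h : (minReps E).Infinite) : (classes E).Infinite := by
  have : (range fun k => {y | E.r (pRep E k) y}) ⊆ classes E := by
    rintro _ ⟨k, rfl⟩
    exact ⟨_, rfl⟩
  refine (infinite_range_of_injective ?_).mono this
  intro j k e
  have h1 : pRep E k ∈ {y | E.r (pRep E k) y} := E.refl _
  have e' : {y | E.r (pRep E j) y} = {y | E.r (pRep E k) y} := e
  rw [← e'] at h1
  have := idx_eq h h1
  rwa [idx_pRep h] at this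

variable {l : ℕ} {hl : 0 < l} {P : Fin l → Set ℕ}

theorem epInf (E : EPalt l hl P) : (minReps E.1).Infinite := minReps_infinite E.2.1

theorem EPalt.ext_idx {E F : EPalt l hl P} (h : idx E.1 = idx F.1) : E = F := by
  apply Subtype.ext
  ext a b
  show E.1.r a b ↔ F.1.r a b
  rw [rel_iff_idx (epInf E), rel_iff_idx (epInf F), h]

theorem smul_facts (h : RM l) (E : EPalt l hl P) :
    (minReps (Setoid.ker (fun a => h.f (idx E.1 a)))).Infinite ∧
    pRep (Setoid.ker (fun a => h.f (idx E.1 a))) = (fun k => pRep E.1 (h.pos k)) ∧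
    idx (Setoid.ker (fun a => h.f (idx E.1 a))) = (fun a => h.f (idx E.1 a)) := by
  apply ker_facts
  · intro k
    simp only [idx_pRep (epInf E), h.f_pos]
  · intro k i hi
    exact h.f_lt _ _ (idx_lt (epInf E) hi)

noncomputable instance : SMul (RM l) (EPalt l hl P) := ⟨fun h E =>
  ⟨Setoid.ker (fun a => h.f (idx E.1 a)), classes_infinite (smul_facts h E).1, by
    intro k
    rw [(smul_facts h E).2.1]
    have := E.2.2 (h.pos k)
    simp only [h.pos_mod] at this
    exact this⟩⟩

theorem smul_idx (h : RM l) (E : EPalt l hl P) (a : ℕ) : idx (h • E).1 a = h.f (idx E.1 a) :=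
  congrFun (smul_facts h E).2.2 a

theorem smul_pRep (h : RM l) (E : EPalt l hl P) (k : ℕ) :
    pRep (h • E).1 k = pRep E.1 (h.pos k) :=
  congrFun (smul_facts h E).2.1 k

noncomputable instance : MulAction (RM l) (EPalt l hl P) where
  one_smul E := EPalt.ext_idx (by funext a; rw [smul_idx]; rfl)
  mul_smul g h E := EPalt.ext_idx (by funext a; simp only [smul_idx]; rfl)

theorem smul_coarsens (h : RM l) (E : EPalt l hl P) : Coarsens (h • E).1 E.1 := by
  intro a b hab
  rw [rel_iff_idx (epInf E)] at hab
  rw [rel_iff_idx (epInf (h • E)), smul_idx, smul_idx, hab]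

theorem coarsens_exists (hdisj : ∀ i j, i ≠ j → Disjoint (P i) (P j)) {G F : EPalt l hl P}
    (h : Coarsens G.1 F.1) : ∃ g : RM l, G = g • F := by
  have hfac : ∀ a, idx G.1 (pRep F.1 (idx F.1 a)) = idx G.1 a := by
    intro a
    rw [← rel_iff_idx (epInf G)]
    exact h _ _ (F.1.symm (idx_rel (epInf F) a))
  have hpos : ∀ k, pRep F.1 (idx F.1 (pRep G.1 k)) = pRep G.1 k := by
    intro k
    apply le_antisymm (pRep_idx_le (epInf F) _)
    apply pRep_mem (epInf G) k
    exact h _ _ (idx_rel (epInf F) _)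
  refine ⟨⟨fun x => idx G.1 (pRep F.1 x), fun k => idx F.1 (pRep G.1 k), ?_, ?_, ?_⟩, ?_⟩
  · intro k
    simp only [hfac, idx_pRep (epInf G)]
  · intro k i hi
    apply idx_lt (epInf G)
    have := pRep_strictMono (epInf F) hi
    rwa [hpos] at this
  · intro k
    have h1 := G.2.2 k
    have h2 := F.2.2 (idx F.1 (pRep G.1 k))
    rw [hpos] at h2
    by_contra hne
    refine Set.disjoint_left.1 (hdisj _ _ ?_) h2 h1
    simpa using hne
  · apply EPalt.ext_idx
    funext a
    rw [smul_idx]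
    exact (hfac a).symm

theorem approx_agree {G F : EPalt l hl P} {m n : ℕ} (h : approx m G.1 = approx n F.1) :
    m = n ∧ pRep G.1 n = pRep F.1 n ∧ ∀ x < pRep F.1 n, idx G.1 x = idx F.1 x := by
  classical
  have hdiag : ∀ x, x < pRep G.1 m ↔ x < pRep F.1 n := by
    intro x
    have h1 : (x, x) ∈ approx m G.1 ↔ (x, x) ∈ approx n F.1 := by rw [h]
    constructor
    · intro hx
      exact (h1.1 ⟨hx, hx, G.1.refl x⟩).1
    · intro hx
      exact (h1.2 ⟨hx, hx, F.1.refl x⟩).1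
  have hL : pRep G.1 m = pRep F.1 n := by
    have h1 := hdiag (pRep G.1 m)
    have h2 := hdiag (pRep F.1 n)
    omega
  have hrel : ∀ x y, x < pRep F.1 n → y < pRep F.1 n → (G.1.r x y ↔ F.1.r x y) := by
    intro x y hx hy
    have h1 : (x, y) ∈ approx m G.1 ↔ (x, y) ∈ approx n F.1 := by rw [h]
    constructor
    · intro hxy
      exact (h1.1 ⟨by rw [hL]; exact hx, by rw [hL]; exact hy, hxy⟩).2.2
    · intro hxy
      exact (h1.2 ⟨hx, hy, hxy⟩).2.2
  have hmr : ∀ x < pRep F.1 n, (x ∈ minReps G.1 ↔ x ∈ minReps F.1) := by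
    intro x hx
    constructor
    · intro hx' y hxy
      by_contra hc
      exact hc (hx' y ((hrel x y hx (by omega)).2 hxy))
    · intro hx' y hxy
      by_contra hc
      exact hc (hx' y ((hrel x y hx (by omega)).1 hxy))
  have hcount : ∀ x ≤ pRep F.1 n, Nat.count (· ∈ minReps G.1) x = Nat.count (· ∈ minReps F.1) x := by
    intro x hx
    apply le_antisymm
    · exact Nat.count_mono_left fun k hk => (hmr k (by omega)).1
    · exact Nat.count_mono_left fun k hk => (hmr k (by omega)).2
  have cG : ∀ k, Nat.count (· ∈ minReps G.1) (pRep G.1 k) = k :=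
    fun k => Nat.count_nth_of_infinite (p := (· ∈ minReps G.1)) (epInf G) k
  have cF : ∀ k, Nat.count (· ∈ minReps F.1) (pRep F.1 k) = k :=
    fun k => Nat.count_nth_of_infinite (p := (· ∈ minReps F.1)) (epInf F) k
  have hmn : m = n := by
    have h1 := hcount _ le_rfl
    rw [cF, ← hL, cG] at h1
    exact h1
  subst hmn
  refine ⟨rfl, hL, fun x hx => ?_⟩
  have hle := pRep_idx_le (epInf F) x
  apply idx_eq (epInf G)
  have h1 : pRep F.1 (idx F.1 x) ∈ minReps G.1 := (hmr _ (by omega)).2 (pRep_mem (epInf F) _)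
  obtain ⟨j, hj⟩ := exists_pRep (epInf G) h1
  have h2 := hcount (pRep F.1 (idx F.1 x)) (by omega)
  rw [cF, ← hj, cG] at h2
  rw [← h2, hj]
  exact (hrel _ _ hx (by omega)).2 (idx_rel (epInf F) x)

theorem approx_smul {h : RM l} {n : ℕ} (hh : h ∈ Kn l n) (F : EPalt l hl P) :
    approx n (h • F).1 = approx n F.1 := by
  ext ⟨x, y⟩
  simp only [approx, smul_pRep, Kn_pos hh le_rfl]
  have key : x < pRep F.1 n → y < pRep F.1 n → ((h • F).1.r x y ↔ F.1.r x y) := by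
    intro hx hy
    rw [rel_iff_idx (epInf (h • F)), rel_iff_idx (epInf F), smul_idx, smul_idx,
      hh _ (idx_lt (epInf F) hx).le, hh _ (idx_lt (epInf F) hy).le]
  constructor
  · rintro ⟨hx, hy, hr⟩
    exact ⟨hx, hy, (key hx hy).1 hr⟩
  · rintro ⟨hx, hy, hr⟩
    exact ⟨hx, hy, (key hx hy).2 hr⟩

theorem basicSet_eq (hdisj : ∀ i j, i ≠ j → Disjoint (P i) (P j)) (n : ℕ) (F : EPalt l hl P) :
    basicSet (EPalt l hl P) (approx n F.1) F = {G | ∃ h ∈ Kn l n, G = h • F} := by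
  ext G
  constructor
  · rintro ⟨hc, m, hm⟩
    obtain ⟨g, rfl⟩ := coarsens_exists hdisj hc
    obtain ⟨rfl, h1, h2⟩ := approx_agree hm
    refine ⟨g, ?_, rfl⟩
    intro i hi
    rcases Nat.lt_or_eq_of_le hi with hi | rfl
    · have h3 := h2 _ (pRep_strictMono (epInf F) hi)
      rwa [smul_idx, idx_pRep (epInf F)] at h3
    · have h3 : idx (g • F).1 (pRep F.1 i) = i := by rw [← h1, idx_pRep (epInf (g • F))]
      rwa [smul_idx, idx_pRep (epInf F)] at h3
  · rintro ⟨h, hh, rfl⟩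
    exact ⟨smul_coarsens h F, n, approx_smul hh F⟩

theorem basicSet_nonempty (hdisj : ∀ i j, i ≠ j → Disjoint (P i) (P j)) {a : Set (ℕ × ℕ)}
    {B : EPalt l hl P} (hne : (basicSet (EPalt l hl P) a B).Nonempty) :
    ∃ (n : ℕ) (F : EPalt l hl P), a = approx n F.1 ∧
      basicSet (EPalt l hl P) a B = basicSet (EPalt l hl P) a F := by
  obtain ⟨G, hc, n, rfl⟩ := hne
  obtain ⟨f, rfl⟩ := coarsens_exists hdisj hc
  obtain ⟨t, ht, hte⟩ := exists_trunc f n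
  obtain ⟨k, hk, e⟩ := trunc_factor ht rfl hte
  have ha : approx n (f • B).1 = approx n (t • B).1 := by
    rw [e, mul_smul, approx_smul hk]
  refine ⟨n, t • B, ha, ?_⟩
  rw [ha]
  ext G
  constructor
  · rintro ⟨hc', m, hm⟩
    obtain ⟨f', rfl⟩ := coarsens_exists hdisj hc'
    obtain ⟨rfl, h1, h2⟩ := approx_agree hm
    rw [smul_pRep, smul_pRep] at h1
    have h3 := (pRep_strictMono (epInf B)).injective h1
    obtain ⟨k', hk', e'⟩ := trunc_factor (f := f') ht (by rw [h3, ht.1]) (by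
      intro i hi
      have h4 := h2 (pRep B.1 i) (by
        rw [smul_pRep, ht.1]
        exact pRep_strictMono (epInf B) hi)
      rwa [smul_idx, smul_idx, idx_pRep (epInf B)] at h4)
    refine ⟨?_, m, hm⟩
    rw [e', mul_smul]
    exact smul_coarsens _ _
  · rintro ⟨hc', m, hm⟩
    exact ⟨fun a b hab => hc' a b (smul_coarsens t B a b hab), m, hm⟩

theorem basicSet_self {a : Set (ℕ × ℕ)} {B F : EPalt l hl P}
    (h : F ∈ basicSet (EPalt l hl P) a B) : ∃ n, a = approx n F.1 := by
  obtain ⟨_, n, hn⟩ := h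
  exact ⟨n, hn.symm⟩

theorem isRamsey_iff (hdisj : ∀ i j, i ≠ j → Disjoint (P i) (P j)) (X : Set (EPalt l hl P)) :
    IsRamsey (EPalt l hl P) X ↔ ARamsey (Kn l) X := by
  have tr : ∀ n (F : EPalt l hl P) h, h ∈ Kn l n →
      basicSet (EPalt l hl P) (approx n F.1) (h • F) = {G | ∃ k ∈ Kn l n, G = k • h • F} := by
    intro n F h hh
    rw [← basicSet_eq hdisj n (h • F), approx_smul hh]
  constructor
  · intro H n F
    obtain ⟨A, hA, h1⟩ := H (approx n F.1) F (by
      rw [basicSet_eq hdisj]; exact ⟨F, 1, one_mem _, (one_smul _ _).symm⟩)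
    rw [basicSet_eq hdisj] at hA
    obtain ⟨h, hh, rfl⟩ := hA
    rw [tr n F h hh] at h1
    refine ⟨h, hh, h1.imp (fun h2 k hk => h2 ⟨k, hk, rfl⟩) (fun h2 k hk hX => ?_)⟩
    have : k • h • F ∈ (∅ : Set (EPalt l hl P)) := h2 ▸ ⟨⟨k, hk, rfl⟩, hX⟩
    exact this
  · intro H a B hne
    obtain ⟨n, F, rfl, e⟩ := basicSet_nonempty hdisj hne
    rw [e]
    obtain ⟨h, hh, h1⟩ := H n F
    refine ⟨h • F, ?_, ?_⟩
    · rw [basicSet_eq hdisj]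
      exact ⟨h, hh, rfl⟩
    · rw [tr n F h hh]
      refine h1.imp ?_ ?_
      · rintro h2 _ ⟨k, hk, rfl⟩
        exact h2 k hk
      · intro h2
        rw [Set.eq_empty_iff_forall_notMem]
        rintro _ ⟨⟨k, hk, rfl⟩, hX⟩
        exact h2 k hk hX

theorem isRamseyNull_iff (hdisj : ∀ i j, i ≠ j → Disjoint (P i) (P j)) (X : Set (EPalt l hl P)) :
    IsRamseyNull (EPalt l hl P) X ↔ ANull (Kn l) X := by
  have tr : ∀ n (F : EPalt l hl P) h, h ∈ Kn l n →
      basicSet (EPalt l hl P) (approx n F.1) (h • F) = {G | ∃ k ∈ Kn l n, G = k • h • F} := by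
    intro n F h hh
    rw [← basicSet_eq hdisj n (h • F), approx_smul hh]
  constructor
  · intro H n F
    obtain ⟨A, hA, h1⟩ := H (approx n F.1) F (by
      rw [basicSet_eq hdisj]; exact ⟨F, 1, one_mem _, (one_smul _ _).symm⟩)
    rw [basicSet_eq hdisj] at hA
    obtain ⟨h, hh, rfl⟩ := hA
    rw [tr n F h hh] at h1
    refine ⟨h, hh, fun k hk hX => ?_⟩
    have : k • h • F ∈ (∅ : Set (EPalt l hl P)) := h1 ▸ ⟨⟨k, hk, rfl⟩, hX⟩
    exact this
  · intro H a B hne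
    obtain ⟨n, F, rfl, e⟩ := basicSet_nonempty hdisj hne
    rw [e]
    obtain ⟨h, hh, h2⟩ := H n F
    refine ⟨h • F, ?_, ?_⟩
    · rw [basicSet_eq hdisj]
      exact ⟨h, hh, rfl⟩
    · rw [tr n F h hh]
      rw [Set.eq_empty_iff_forall_notMem]
      rintro _ ⟨⟨k, hk, rfl⟩, hX⟩
      exact h2 k hk hX

theorem ellentuck_open_iff (hdisj : ∀ i j, i ≠ j → Disjoint (P i) (P j))
    (U : Set (EPalt l hl P)) :
    (ellentuckTop (EPalt l hl P)).IsOpen U ↔ ∀ s ∈ U, ∃ n, ∀ h ∈ Kn l n, h • s ∈ U := by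
  constructor
  · intro hU
    have hU' : TopologicalSpace.GenerateOpen
      {U | ∃ a E, U = basicSet (EPalt l hl P) a E} U := hU
    induction hU' with
    | basic V hV =>
      obtain ⟨a, B, rfl⟩ := hV
      intro s hs
      obtain ⟨n, rfl⟩ := basicSet_self hs
      refine ⟨n, fun h hh => ?_⟩
      exact ⟨fun a b hab => smul_coarsens h s a b (hs.1 a b hab), n, approx_smul hh s⟩
    | univ => exact fun s _ => ⟨0, fun _ _ => mem_univ _⟩
    | inter V W hV hW ihV ihW =>
      rintro s ⟨hs1, hs2⟩
      obtain ⟨n, hn⟩ := ihV hV s hs1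
      obtain ⟨m, hm⟩ := ihW hW s hs2
      exact ⟨max n m, fun h hh => ⟨hn h (Kn_anti (le_max_left _ _) hh),
        hm h (Kn_anti (le_max_right _ _) hh)⟩⟩
    | sUnion T hT ih =>
      rintro s ⟨V, hV, hs⟩
      obtain ⟨n, hn⟩ := ih V hV (hT V hV) s hs
      exact ⟨n, fun h hh => ⟨V, hV, hn h hh⟩⟩
  · intro hU
    choose! N hN using hU
    have e : U = ⋃₀ {V | ∃ s ∈ U, V = basicSet (EPalt l hl P) (approx (N s) s.1) s} := by
      ext s
      constructor
      · intro hs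
        refine ⟨_, ⟨s, hs, rfl⟩, ?_⟩
        rw [basicSet_eq hdisj]
        exact ⟨1, one_mem _, (one_smul _ _).symm⟩
      · rintro ⟨_, ⟨s', hs', rfl⟩, hs⟩
        rw [basicSet_eq hdisj] at hs
        obtain ⟨h, hh, rfl⟩ := hs
        exact hN s' hs' h hh
    rw [e]
    apply TopologicalSpace.GenerateOpen.sUnion
    rintro _ ⟨s, _, rfl⟩
    exact TopologicalSpace.GenerateOpen.basic _ ⟨_, _, rfl⟩

end Space


/-- **Theorem 3.2:** `(𝓔^P_∞, ≤, r)` is a topological Ramsey space: a set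
`𝓧 ⊆ 𝓔^P_∞` has the property of Baire with respect to the Ellentuck topology iff it
is Ramsey, and it is Ellentuck-meagre iff it is Ramsey null. -/
theorem EPaltIsTopologicalRamseySpace
    (l : ℕ) (hl : 0 < l) (P : Fin l → Set ℕ)
    (hinf : ∀ i, (P i).Infinite)
    (hdisj : ∀ i j, i ≠ j → Disjoint (P i) (P j))
    (hcov : ⋃ i, P i = Set.univ)
    (hmin : ∀ i j : Fin l, i < j → sInf (P i) < sInf (P j))
    (X : Set ↥(EPalt l hl P)) :
    (HasBP (EPalt l hl P) X ↔ IsRamsey (EPalt l hl P) X) ∧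
    (@IsMeagre _ (ellentuckTop (EPalt l hl P)) X ↔ IsRamseyNull (EPalt l hl P) X) := by
  letI : TopologicalSpace ↥(EPalt l hl P) := ellentuckTop (EPalt l hl P)
  have H : AbsRamsey (Kn l) ↥(EPalt l hl P) :=
    { anti := Kn_anti
      fusion := fusion
      pigeon := pigeon hl
      isOpen_iff := ellentuck_open_iff hdisj }
  rw [isRamsey_iff hdisj, isRamseyNull_iff hdisj]
  exact H.main X

end DualRamsey
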